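/- Let p be a prime, t > 1 an integer, and define S(n) = 𝔖_{p^t}(p^t·n). If S is eventually periodic with least eventual period T, then p does not divide T. -/

import Mathlib

/-- The last non-zero digit of `n` in base `b`: if `n = b^r * n'` with `b ∤ n'`,
this is `n' % b`. -/
def lastNonzeroDigit (b n : ℕ) : ℕ := (n / b ^ (Nat.maxPowDiv b n)) % b

/-- `𝔖_b(n)`: the last non-zero digit of `n^n` in base `b`. -/
def lnz (b n : ℕ) : ℕ := lastNonzeroDigit b (n ^ n)

/-!
Let `S n = 𝔖_{p^t}(p^t n)`. For `m` coprime to `p`, the value `S (p ^ v * m)` determines the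
exponent `v * N` modulo `t` and the residue of `m ^ N` modulo `p`, where `N = p ^ (t + v) * m`.

Suppose that `S` is eventually periodic, and let `q` be coprime to `p`. Some period `p ^ b * c` is
divisible by `q`, with `c` coprime to `p`; comparing `S` at `p ^ b * u` and at
`p ^ b * (u + c) = p ^ (b + 1) * w` leaves the residues of `u` and `w` modulo `q` at our disposal,
and taking `w ≡ c [MOD p]` gives `u + w ≡ 0 [MOD p]`. When a prime `q ≠ p` divides `t`, the
exponents force `q` to divide a power of `p`; so `t` is a power of `p`. When `q = p - 1`, Fermat's
little theorem turns the congruence between the units into `u ≡ w [MOD p]`, so `p ∣ 2 * w` and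
`p = 2`. In the remaining case `p = 2`, `t = 2 ^ s`, the sequence is equal to `1` away from `0`, and
its least eventual period is `1`.
-/

/-- `T` is an eventual period of the sequence `f`; it may be zero, and need not be the least. -/
def IsEventualPeriod {α : Type*} (f : ℕ → α) (T : ℕ) : Prop :=
  ∃ n₀ : ℕ, ∀ n ≥ n₀, f (n + T) = f n

/-- The sequence `n ↦ 𝔖_{p^t}(p^t n)`. -/
def primePowLnz (p t n : ℕ) : ℕ := lnz (p ^ t) (p ^ t * n)

section Congruences

theorem pow_modEq_pow_of_modEq_totient {x n k l : ℕ} (hx : x.Coprime n)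
    (hkl : k ≡ l [MOD n.totient]) : x ^ k ≡ x ^ l [MOD n] := by
  obtain rfl | rfl | hn : n = 0 ∨ n = 1 ∨ 1 < n := by lia
  · obtain rfl : x = 1 := (Nat.coprime_zero_right x).1 hx
    simp only [one_pow, Nat.ModEq.refl]
  · exact Nat.modEq_one
  · rw [Nat.ModEq, Nat.pow_totient_mod hn hx, hkl, ← Nat.pow_totient_mod hn hx]

theorem modEq_one_sub_one {n : ℕ} (hn : 1 ≤ n) : n ≡ 1 [MOD n - 1] :=
  ((Nat.modEq_iff_dvd' hn).2 dvd_rfl).symm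

theorem pow_pow_mul_self_modEq_self {p x : ℕ} (hp : p.Prime) (hx : x.Coprime p)
    (hx1 : x ≡ 1 [MOD p - 1]) (k : ℕ) : x ^ (p ^ k * x) ≡ x [MOD p] := by
  have hexp : p ^ k * x ≡ 1 [MOD p.totient] := by
    simpa only [Nat.totient_prime hp, one_pow, mul_one] using
      ((modEq_one_sub_one hp.one_le).pow k).mul hx1
  simpa only [pow_one] using pow_modEq_pow_of_modEq_totient hx hexp

theorem gcd_pow_mul_pow_of_coprime {p r t x : ℕ} (hr : r ≤ t) (hx : x.Coprime p) :
    (p ^ r * x).gcd (p ^ t) = p ^ r := by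
  rw [(hx.pow_right t).gcd_mul_right_cancel, Nat.gcd_eq_left (pow_dvd_pow p hr)]

theorem eq_and_modEq_of_pow_mul_modEq_pow_mul {p t r s x y : ℕ} (hp : 1 < p) (hr : r < t)
    (hs : s < t) (hx : x.Coprime p) (hy : y.Coprime p)
    (h : p ^ r * x ≡ p ^ s * y [MOD p ^ t]) :
    r = s ∧ x ≡ y [MOD p] := by
  obtain rfl : r = s := by
    refine Nat.pow_right_injective hp ?_
    simpa only [gcd_pow_mul_pow_of_coprime hr.le hx, gcd_pow_mul_pow_of_coprime hs.le hy]
      using h.gcd_eq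
  have hmod : p ^ r * x ≡ p ^ r * y [MOD p ^ r * p] := h.of_dvd (pow_dvd_pow p hr)
  exact ⟨rfl, hmod.mul_left_cancel' (pow_ne_zero r (by lia))⟩

end Congruences

section LastNonzeroDigit

theorem lastNonzeroDigit_pow_mul {b m : ℕ} (hb : b ≠ 0) (hm : ¬ b ∣ m) (r : ℕ) :
    lastNonzeroDigit b (b ^ r * m) = m % b := by
  have hm0 : m ≠ 0 := fun h => hm (h ▸ dvd_zero b)
  have hval : padicValNat b (b ^ r * m) = r := congrArg Prod.fst <|
    Nat.maxPowDvdDiv_of_pow_mul_eq (mul_ne_zero (pow_ne_zero r hb) hm0) rfl hm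
  calc lastNonzeroDigit b (b ^ r * m) = b ^ r * m / b ^ padicValNat b (b ^ r * m) % b := rfl
    _ = m % b := by
      rw [hval, Nat.mul_div_cancel_left m (Nat.pow_pos (Nat.pos_of_ne_zero hb))]

theorem lastNonzeroDigit_base_pow_pow_mul {p t m : ℕ} (hp : p ≠ 0) (ht : t ≠ 0) (hm : ¬ p ∣ m)
    (e : ℕ) : lastNonzeroDigit (p ^ t) (p ^ e * m) = p ^ (e % t) * m % p ^ t := by
  have hndvd : ¬ p ^ t ∣ p ^ (e % t) * m := fun h => hm <| by
    have hdvd : p ^ (e % t) * p ∣ p ^ (e % t) * m :=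
      (pow_dvd_pow p (Nat.mod_lt e (Nat.pos_of_ne_zero ht))).trans h
    exact Nat.dvd_of_mul_dvd_mul_left (Nat.pow_pos (Nat.pos_of_ne_zero hp)) hdvd
  rw [← lastNonzeroDigit_pow_mul (pow_ne_zero t hp) hndvd (e / t), ← mul_assoc, ← pow_mul,
    ← pow_add, Nat.div_add_mod]

variable {p t : ℕ}

theorem primePowLnz_pow_mul {m : ℕ} (hp : 1 < p) (ht : t ≠ 0) (hm : m.Coprime p) (v : ℕ) :
    primePowLnz p t (p ^ v * m) =
      p ^ (v * (p ^ (t + v) * m) % t) * m ^ (p ^ (t + v) * m) % p ^ t := by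
  have hndvd : ¬ p ∣ m ^ (p ^ (t + v) * m) := fun h =>
    hp.ne' (((hm.pow_left _).symm).eq_one_of_dvd h)
  rw [primePowLnz, lnz, ← mul_assoc, ← pow_add, mul_pow, ← pow_mul,
    lastNonzeroDigit_base_pow_pow_mul (by lia) ht hndvd, add_mul, Nat.mul_add_mod]

theorem modEq_and_modEq_of_primePowLnz_eq {v w x y : ℕ} (hp : 1 < p) (ht : t ≠ 0)
    (hx : x.Coprime p) (hy : y.Coprime p)
    (h : primePowLnz p t (p ^ v * x) = primePowLnz p t (p ^ w * y)) :
    v * (p ^ (t + v) * x) ≡ w * (p ^ (t + w) * y) [MOD t] ∧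
      x ^ (p ^ (t + v) * x) ≡ y ^ (p ^ (t + w) * y) [MOD p] := by
  rw [primePowLnz_pow_mul hp ht hx, primePowLnz_pow_mul hp ht hy] at h
  have ht' : 0 < t := Nat.pos_of_ne_zero ht
  exact eq_and_modEq_of_pow_mul_modEq_pow_mul hp (Nat.mod_lt _ ht') (Nat.mod_lt _ ht')
    (hx.pow_left _) (hy.pow_left _) h

theorem primePowLnz_two_two_pow {s n : ℕ} (hn : n ≠ 0) : primePowLnz 2 (2 ^ s) n = 1 := by
  obtain ⟨v, m, hm, rfl⟩ := Nat.exists_eq_two_pow_mul_odd hn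
  set t := 2 ^ s
  have ht : t ≠ 0 := by positivity
  have hexp : v * (2 ^ (t + v) * m) % t = 0 := by
    have hst : s ≤ t + v := Nat.lt_two_pow_self.le.trans (Nat.le_add_right t v)
    have hdvd : t ∣ 2 ^ (t + v) := pow_dvd_pow 2 hst
    exact Nat.mod_eq_zero_of_dvd ((hdvd.mul_right m).mul_left v)
  have hunit : m ^ (2 ^ (t + v) * m) ≡ m ^ 0 [MOD 2 ^ t] := by
    refine pow_modEq_pow_of_modEq_totient (hm.coprime_two_right.pow_right t) ?_
    have hle : t - 1 ≤ t + v := (Nat.sub_le t 1).trans (Nat.le_add_right t v)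
    rw [Nat.totient_prime_pow Nat.prime_two (Nat.pos_of_ne_zero ht), Nat.add_one_sub_one, mul_one]
    exact Nat.modEq_zero_iff_dvd.2 ((pow_dvd_pow 2 hle).mul_right m)
  rw [primePowLnz_pow_mul one_lt_two ht hm.coprime_two_right, hexp, pow_zero, one_mul]
  exact Nat.mod_eq_of_modEq hunit (Nat.one_lt_two_pow ht)

end LastNonzeroDigit

namespace IsEventualPeriod

theorem mul_right {α : Type*} {f : ℕ → α} {T : ℕ} (h : IsEventualPeriod f T) (k : ℕ) :
    IsEventualPeriod f (T * k) := by
  obtain ⟨n₀, hn₀⟩ := h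
  refine ⟨n₀, fun n hn => ?_⟩
  induction k with
  | zero => rfl
  | succ k ih => rw [Nat.mul_succ, ← add_assoc, hn₀ _ (by lia), ih]

theorem exists_coprime_apply_pow_mul_eq {α : Type*} {f : ℕ → α} {T p q : ℕ} (hp : p.Prime)
    (hq : q ≠ 0) (hqp : q.Coprime p) (hT : T ≠ 0) (h : IsEventualPeriod f T) :
    ∃ b u w, u.Coprime p ∧ w.Coprime p ∧ p ∣ u + w ∧ u ≡ p ^ 2 [MOD q] ∧ w ≡ p [MOD q] ∧
      f (p ^ b * u) = f (p ^ (b + 1) * w) := by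
  obtain ⟨b, d, hd, rfl⟩ := Nat.exists_eq_pow_mul_and_not_dvd hT p hp.ne_one
  obtain ⟨n₀, hn₀⟩ := h.mul_right q
  obtain ⟨r, rfl⟩ : ∃ r, p = r + 1 := Nat.exists_eq_add_one.2 hp.pos
  have hc : (d * q).Coprime (r + 1) := (hp.coprime_iff_not_dvd.2 hd).symm.mul_left hqp
  have hr : r.Coprime (r + 1) := Nat.coprime_self_add_right.2 r.coprime_one_right
  -- With `c = d * q` and `j = 1 + q * n₀`, these satisfy `u + c = p * w` and `n₀ ≤ u`.
  refine ⟨b, r * (d * q) + (r + 1) ^ 2 * (1 + q * n₀), d * q + (r + 1) * (1 + q * n₀),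
    ?_, ?_, ?_, ?_, ?_, ?_⟩
  · rw [pow_two, mul_assoc, Nat.coprime_add_mul_left_left]
    exact hr.mul_left hc
  · rwa [Nat.coprime_add_mul_left_left]
  · exact ⟨d * q + (r + 2) * (1 + q * n₀), by ring⟩
  · rw [show r * (d * q) + (r + 1) ^ 2 * (1 + q * n₀) =
      (r + 1) ^ 2 + q * (r * d + (r + 1) ^ 2 * n₀) by ring]
    exact Nat.add_mul_mod_self_left _ _ _
  · rw [show d * q + (r + 1) * (1 + q * n₀) = (r + 1) + q * (d + (r + 1) * n₀) by ring]
    exact Nat.add_mul_mod_self_left _ _ _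
  · rw [← hn₀]
    · congr 1
      ring
    · have hn₀q : n₀ ≤ q * n₀ := Nat.le_mul_of_pos_left n₀ (Nat.pos_of_ne_zero hq)
      calc n₀ ≤ 1 + q * n₀ := by lia
        _ ≤ (r + 1) ^ 2 * (1 + q * n₀) := Nat.le_mul_of_pos_left _ (by positivity)
        _ ≤ r * (d * q) + (r + 1) ^ 2 * (1 + q * n₀) := Nat.le_add_left _ _
        _ ≤ _ := Nat.le_mul_of_pos_left _ (by positivity)

variable {p t T : ℕ}

theorem exists_exponent_eq_pow_of_primePowLnz (hp : p.Prime) (ht : t ≠ 0) (hT : T ≠ 0)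
    (h : IsEventualPeriod (primePowLnz p t) T) : ∃ s, t = p ^ s := by
  refine ⟨_, Nat.eq_prime_pow_of_unique_prime_dvd ht fun {q} hq hqt => ?_⟩
  by_contra hne
  have hqp : q.Coprime p := (Nat.coprime_primes hq hp).2 hne
  obtain ⟨b, u, w, hu, hw, -, huq, hwq, heq⟩ :=
    h.exists_coprime_apply_pow_mul_eq hp hq.ne_zero hqp hT
  have hexp := (modEq_and_modEq_of_primePowLnz_eq hp.one_lt ht hu hw heq).1.of_dvd hqt
  have hcancel : 0 + b * p ^ (t + b + 2) ≡ p ^ (t + b + 2) + b * p ^ (t + b + 2) [MOD q] := by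
    calc 0 + b * p ^ (t + b + 2) = b * (p ^ (t + b) * p ^ 2) := by ring
      _ ≡ b * (p ^ (t + b) * u) [MOD q] := (huq.symm.mul_left _).mul_left _
      _ ≡ (b + 1) * (p ^ (t + (b + 1)) * w) [MOD q] := hexp
      _ ≡ (b + 1) * (p ^ (t + (b + 1)) * p) [MOD q] := (hwq.mul_left _).mul_left _
      _ = p ^ (t + b + 2) + b * p ^ (t + b + 2) := by ring
  have hdvd : q ∣ p ^ (t + b + 2) :=
    Nat.modEq_zero_iff_dvd.1 (hcancel.add_right_cancel' _).symm
  exact hq.ne_one ((hqp.pow_right _).eq_one_of_dvd hdvd)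

theorem base_eq_two_of_primePowLnz (hp : p.Prime) (ht : t ≠ 0) (hT : T ≠ 0)
    (h : IsEventualPeriod (primePowLnz p t) T) : p = 2 := by
  have hcop : (p - 1).Coprime p :=
    ((Nat.coprime_self_sub_right hp.one_le).2 p.coprime_one_right).symm
  have hp1 : p ≡ 1 [MOD p - 1] := modEq_one_sub_one hp.one_le
  obtain ⟨b, u, w, hu, hw, huw, hu1, hw1, heq⟩ :=
    h.exists_coprime_apply_pow_mul_eq hp (Nat.sub_ne_zero_of_lt hp.one_lt) hcop hT
  have hunit := (modEq_and_modEq_of_primePowLnz_eq hp.one_lt ht hu hw heq).2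
  have huw' : u ≡ w [MOD p] := by
    calc u ≡ u ^ (p ^ (t + b) * u) [MOD p] :=
          (pow_pow_mul_self_modEq_self hp hu (hu1.trans (hp1.pow 2)) _).symm
      _ ≡ w ^ (p ^ (t + (b + 1)) * w) [MOD p] := hunit
      _ ≡ w [MOD p] := pow_pow_mul_self_modEq_self hp hw (hw1.trans hp1) _
  have hdvd : p ∣ 2 * w := by
    rw [two_mul]
    exact ((huw'.add_right w).dvd_iff dvd_rfl).1 huw
  exact (Nat.prime_dvd_prime_iff_eq hp Nat.prime_two).1 (hw.symm.dvd_of_dvd_mul_right hdvd)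

end IsEventualPeriod

theorem stmt_13_general {p t T : ℕ} (hp : p.Prime) (ht : t ≠ 0)
    (hT : IsLeast {T' | 0 < T' ∧ IsEventualPeriod (primePowLnz p t) T'} T) : T = 1 := by
  obtain ⟨⟨hpos, hper⟩, hleast⟩ := hT
  obtain rfl := hper.base_eq_two_of_primePowLnz hp ht hpos.ne'
  obtain ⟨s, rfl⟩ := hper.exists_exponent_eq_pow_of_primePowLnz hp ht hpos.ne'
  have hone : IsEventualPeriod (primePowLnz 2 (2 ^ s)) 1 := ⟨1, fun n hn => by
    rw [primePowLnz_two_two_pow n.succ_ne_zero, primePowLnz_two_two_pow (by lia)]⟩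
  exact le_antisymm (hleast ⟨one_pos, hone⟩) hpos

theorem stmt_13 (p t : ℕ) (hp : p.Prime) (ht : 1 < t) (T : ℕ) (hT : 0 < T)
    (hper : ∃ n₀ : ℕ, ∀ n ≥ n₀,
      lnz (p ^ t) (p ^ t * (n + T)) = lnz (p ^ t) (p ^ t * n))
    (hleast : ∀ T' : ℕ, 0 < T' →
      (∃ n₀ : ℕ, ∀ n ≥ n₀,
        lnz (p ^ t) (p ^ t * (n + T')) = lnz (p ^ t) (p ^ t * n)) → T ≤ T') :
    ¬ p ∣ T := by
  rw [stmt_13_general hp (by lia) ⟨⟨hT, hper⟩, fun T' h => hleast T' h.1 h.2⟩]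
  exact hp.not_dvd_one
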